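/- Let α < 0, γ < 0 and β ∈ ℝ, and let (u,v) be a regular solution of the Schrödinger–Korteweg–de Vries system with these parameters. Then for all exponents p₁ and m with 0 < p₁ < 2/3 and 0 < m < 1 − p₁/2, and every constant K > 0, liminf_{t→∞} ∫_{{x : |x − t^m| ≤ K·t^{p₁}}} ( v(t,x)² + |u(t,x)|² ) dx = 0. -/

import Mathlib

open MeasureTheory Filter

/-- A regular solution of the Schrödinger–Korteweg–de Vries system
    `i ∂ₜu + ∂ₓ²u = α u v + β u |u|²`,
    `∂ₜv + ∂ₓ³v + v ∂ₓv = γ ∂ₓ(|u|²)`: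
    `u, v` are smooth in `(t,x)`, Schwartz in `x` for each fixed `t`, satisfy the
    equations pointwise, and have uniformly-in-time bounded `H¹ₓ` norms. -/
def IsSKdVSolution (α β γ : ℝ) (u : ℝ → ℝ → ℂ) (v : ℝ → ℝ → ℝ) : Prop :=
  ContDiff ℝ (⊤ : ℕ∞) (fun p : ℝ × ℝ => u p.1 p.2) ∧
  ContDiff ℝ (⊤ : ℕ∞) (fun p : ℝ × ℝ => v p.1 p.2) ∧
  (∀ t : ℝ, ∃ f : SchwartzMap ℝ ℂ, ∀ x, f x = u t x) ∧
  (∀ t : ℝ, ∃ g : SchwartzMap ℝ ℝ, ∀ x, g x = v t x) ∧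
  (∀ t x : ℝ,
    Complex.I * deriv (fun s => u s x) t + iteratedDeriv 2 (u t) x
      = (α : ℂ) * u t x * (v t x : ℂ) + (β : ℂ) * u t x * (‖u t x‖ : ℂ) ^ 2) ∧
  (∀ t x : ℝ,
    deriv (fun s => v s x) t + iteratedDeriv 3 (v t) x + v t x * deriv (v t) x
      = γ * deriv (fun y => ‖u t y‖ ^ 2) x) ∧
  (∃ C : ℝ, ∀ t : ℝ,
    (∫ x : ℝ, ‖u t x‖ ^ 2) + (∫ x : ℝ, ‖deriv (u t) x‖ ^ 2) +
      (∫ x : ℝ, (v t x) ^ 2) + (∫ x : ℝ, (deriv (v t) x) ^ 2) ≤ C)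

/-!
The second equation is the conservation law `∂ₜv + ∂ₓ(∂ₓ²v + f) = 0`, where `f = v²/2 - γ|u|²`
controls `v² + |u|²` because `γ < 0`.
Let `φ` be a bump equal to `1` on `[-K, K]` with primitive `Φ`, let `ξ t` be the centre of the
window, and put `z_r = (x - ξ t) / t ^ r`. For an exponent `p < q < 2 - 2p`, which exists as
`p < 2/3`, pair `v` with the compactly supported weight `W = Φ(z_p) - Φ(z_q)`. Integration by parts
gives
`d/dt ∫ v W = ∫ v (∂ₜ + ∂ₓ³) W + t ^ (-p) ∫ f φ(z_p) - t ^ (-q) ∫ f φ(z_q)`.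
By Cauchy–Schwarz the first term is `o(t ^ (-p))`; the last one is `O(t ^ (-q))`. If the mass in the
window stayed above some `δ > 0`, the derivative would eventually be at least a constant multiple of
`t ^ (-p)`, so `∫ v W` would grow at least like `t ^ (1 - p)`. But `W` is bounded and supported in a
window of size `t ^ q`, so `∫ v W = O(t ^ (q / 2)) = o(t ^ (1 - p))`.
-/

open Set Asymptotics Function
open scoped Topology

lemma liminf_eq_zero_of_frequently_lt {ι : Type*} {l : Filter ι} {f : ι → ℝ}
    (hf : ∀ᶠ i in l, 0 ≤ f i) (hlt : ∀ δ > 0, ∃ᶠ i in l, f i < δ) : liminf f l = 0 := by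
  have hbelow : l.IsBoundedUnder (· ≥ ·) f := ⟨0, hf⟩
  have habove : l.IsCoboundedUnder (· ≥ ·) f :=
    .of_frequently_le ((hlt 1 one_pos).mono fun _ h => h.le)
  refine le_antisymm (le_of_forall_pos_le_add fun δ hδ => ?_) (le_liminf_of_le habove hf)
  rw [zero_add]
  exact liminf_le_of_frequently_le ((hlt δ hδ).mono fun _ h => h.le) hbelow

lemma isLittleO_rpow_rpow_atTop {a b : ℝ} (hab : a < b) :
    (fun t : ℝ => t ^ a) =o[atTop] fun t => t ^ b := by
  have hlim : Tendsto (fun t : ℝ => t ^ a / t ^ b) atTop (𝓝 0) := by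
    refine (tendsto_rpow_neg_atTop (sub_pos.2 hab)).congr' ?_
    filter_upwards [eventually_gt_atTop 0] with t ht
    rw [neg_sub, Real.rpow_sub ht]
  refine (isLittleO_iff_tendsto' ?_).2 hlim
  filter_upwards [eventually_gt_atTop 0] with t ht h
  exact absurd h (Real.rpow_pos_of_pos ht b).ne'

lemma not_isLittleO_of_rpow_le_deriv {f f' : ℝ → ℝ} {A p : ℝ} (hA : 0 < A) (hp : p < 1)
    (hf : ∀ᶠ t in atTop, HasDerivAt f (f' t) t) (hf' : ∀ᶠ t in atTop, A * t ^ (-p) ≤ f' t) :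
    ¬ f =o[atTop] fun t => t ^ (1 - p) := by
  intro hsmall
  have hp' : 0 < 1 - p := sub_pos.2 hp
  set B := A / (1 - p) with hB
  have hB0 : 0 < B := div_pos hA hp'
  obtain ⟨T, hT⟩ := eventually_atTop.1 ((hf.and hf').and (eventually_gt_atTop 0))
  have hderiv : ∀ t ∈ Ici T,
      HasDerivAt (fun t => f t - B * t ^ (1 - p)) (f' t - A * t ^ (-p)) t := fun t ht => by
    convert! (hT t ht).1.1.sub
      ((Real.hasDerivAt_rpow_const (p := 1 - p) (.inl (hT t ht).2.ne')).const_mul B) using 2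
    rw [hB, sub_sub_cancel_left]
    field_simp
  have hmono : MonotoneOn (fun t => f t - B * t ^ (1 - p)) (Ici T) := by
    refine monotoneOn_of_hasDerivWithinAt_nonneg (convex_Ici T)
      (fun t ht => (hderiv t ht).continuousAt.continuousWithinAt)
      (fun t ht => (hderiv t (interior_subset ht)).hasDerivWithinAt) fun t ht => ?_
    exact sub_nonneg.2 (hT t (interior_subset ht)).1.2
  have hconst : (fun _ : ℝ => f T - B * T ^ (1 - p)) =o[atTop] fun t => t ^ (1 - p) := by
    refine isLittleO_const_left.2 (.inr ?_)
    exact tendsto_norm_atTop_atTop.comp (tendsto_rpow_atTop hp')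
  obtain ⟨t, ⟨⟨hft, hct⟩, htT⟩, ht0⟩ := ((((hsmall.bound (half_pos hB0)).and
    (hconst.bound (div_pos hB0 four_pos))).and (eventually_ge_atTop T)).and
    (eventually_gt_atTop 0)).exists
  have hpow := Real.rpow_pos_of_pos ht0 (1 - p)
  rw [Real.norm_of_nonneg hpow.le] at hft hct
  have hgrow : f T - B * T ^ (1 - p) ≤ f t - B * t ^ (1 - p) := hmono self_mem_Ici htT htT
  have hft' := (le_abs_self _).trans hft
  have hct' := (neg_le_abs _).trans hct
  nlinarith [mul_pos hB0 hpow]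

lemma abs_integral_mul_le_of_eqOn_zero {X : Type*} [MeasurableSpace X] {μ : Measure X}
    {f g : X → ℝ} {s : Set X} {M : ℝ} (hf : MemLp f 2 μ) (hs : MeasurableSet s) (hμs : μ s ≠ ⊤)
    (hg : ∀ x, |g x| ≤ M) (hgs : EqOn g 0 sᶜ) :
    |∫ x, f x * g x ∂μ| ≤ M * √(μ.real s) * √(∫ x, f x ^ 2 ∂μ) := by
  rcases isEmpty_or_nonempty X with hX | ⟨⟨x₀⟩⟩
  · simp [integral_of_isEmpty]
  have hM : 0 ≤ M := (abs_nonneg _).trans (hg x₀)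
  have hone : MemLp (s.indicator fun _ => (1 : ℝ)) 2 μ := memLp_indicator_const 2 hs 1 (.inr hμs)
  have hholder : ∫ x, |f x| * s.indicator (fun _ => 1) x ∂μ ≤ √(∫ x, f x ^ 2 ∂μ) * √(μ.real s) := by
    have hsq : ∀ x, s.indicator (fun _ => (1 : ℝ)) x ^ 2 = s.indicator (fun _ => 1) x := fun x => by
      by_cases hx : x ∈ s <;> simp [hx]
    have h := integral_mul_le_Lp_mul_Lq_of_nonneg Real.HolderConjugate.two_two
      (ae_of_all μ fun x => abs_nonneg (f x))
      (ae_of_all μ fun x => indicator_nonneg (fun _ _ => zero_le_one' ℝ) x)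
      (by simpa using hf.norm) (by simpa using hone)
    simpa only [Real.rpow_two, sq_abs, hsq, ← Real.sqrt_eq_rpow, integral_indicator_const _ hs,
      smul_eq_mul, mul_one] using h
  calc |∫ x, f x * g x ∂μ| ≤ ∫ x, M * (|f x| * s.indicator (fun _ => 1) x) ∂μ := by
        rw [← Real.norm_eq_abs]
        refine norm_integral_le_of_norm_le ((hf.norm.integrable_mul hone).const_mul M)
          (ae_of_all μ fun x => ?_)
        by_cases hx : x ∈ s
        · simpa [hx, abs_mul, mul_comm] using mul_le_mul_of_nonneg_left (hg x) (abs_nonneg (f x))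
        · simp [hx, hgs hx]
    _ ≤ M * (√(∫ x, f x ^ 2 ∂μ) * √(μ.real s)) := by
        rw [integral_const_mul]
        exact mul_le_mul_of_nonneg_left hholder hM
    _ = M * √(μ.real s) * √(∫ x, f x ^ 2 ∂μ) := by ring

lemma integral_iteratedDeriv_mul_of_hasCompactSupport {k : ℕ} {f w : ℝ → ℝ} (hf : ContDiff ℝ k f)
    (hw : ContDiff ℝ k w) (hsupp : HasCompactSupport w) :
    ∫ x, iteratedDeriv k f x * w x = (-1) ^ k * ∫ x, f x * iteratedDeriv k w x := by
  induction k generalizing w with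
  | zero => simp
  | succ k ih =>
    have hw' : ContDiff ℝ k (deriv w) := (contDiff_succ_iff_deriv.1 (by exact_mod_cast hw)).2.2
    have hfk : ContDiff ℝ 1 (iteratedDeriv k f) := by
      rw [iteratedDeriv_eq_iterate]
      exact ContDiff.iterate_deriv' 1 k (by simpa [add_comm] using hf)
    have hparts : ∫ x, w x * iteratedDeriv (k + 1) f x = -∫ x, deriv w x * iteratedDeriv k f x := by
      refine integral_mul_deriv_eq_deriv_mul_of_integrable
        (fun x _ => (hw.differentiable (by simp) x).hasDerivAt) (fun x _ => ?_) ?_ ?_ ?_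
      · rw [iteratedDeriv_succ]
        exact (hfk.differentiable one_ne_zero x).hasDerivAt
      · exact (hw.continuous.mul
          (hf.continuous_iteratedDeriv' (k + 1))).integrable_of_hasCompactSupport hsupp.mul_right
      · exact (hw'.continuous.mul hfk.continuous).integrable_of_hasCompactSupport
          hsupp.deriv.mul_right
      · exact (hw.continuous.mul hfk.continuous).integrable_of_hasCompactSupport hsupp.mul_right
    calc ∫ x, iteratedDeriv (k + 1) f x * w x
        = -∫ x, iteratedDeriv k f x * deriv w x := by simp only [mul_comm _ (w _), hparts, mul_comm]
      _ = (-1) ^ (k + 1) * ∫ x, f x * iteratedDeriv (k + 1) w x := by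
          rw [ih (hf.of_le (by simp)) hw' hsupp.deriv, iteratedDeriv_succ', pow_succ]
          ring

/-! ### Differentiation under the integral sign -/

lemma deriv_slice_eq_zero_of_eventually_eq_zero {X E : Type*} [NormedAddCommGroup E]
    [NormedSpace ℝ E] {F : ℝ → X → E} {t : ℝ} {k : Set X}
    (hsupp : ∀ᶠ τ in 𝓝 t, ∀ x ∉ k, F τ x = 0) : ∀ x ∉ k, deriv (fun τ => F τ x) t = 0 := by
  intro x hx
  have hzero : (fun τ => F τ x) =ᶠ[𝓝 t] fun _ => 0 := hsupp.mono fun _ h => h x hx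
  rw [hzero.deriv_eq, deriv_const]

section Leibniz

variable {X E : Type*} [NormedAddCommGroup X] [NormedSpace ℝ X] [NormedAddCommGroup E]
  [NormedSpace ℝ E] {F : ℝ → X → E} {s : Set ℝ}

lemma hasDerivAt_slice_of_contDiffOn (hs : IsOpen s) (hF : ContDiffOn ℝ 1 (uncurry F) (s ×ˢ univ))
    {t : ℝ} (ht : t ∈ s) (x : X) :
    HasDerivAt (fun τ => F τ x) (fderiv ℝ (uncurry F) (t, x) (1, 0)) t := by
  have hdiff : HasFDerivAt (uncurry F) (fderiv ℝ (uncurry F) (t, x)) (t, x) :=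
    ((hF.contDiffAt ((hs.prod isOpen_univ).mem_nhds ⟨ht, mem_univ x⟩)).differentiableAt
      one_ne_zero).hasFDerivAt
  exact hdiff.comp_hasDerivAt t ((hasDerivAt_id t).prodMk (hasDerivAt_const t x))

lemma continuousOn_deriv_slice_of_contDiffOn (hs : IsOpen s)
    (hF : ContDiffOn ℝ 1 (uncurry F) (s ×ˢ univ)) :
    ContinuousOn (fun q : ℝ × X => deriv (fun τ => F τ q.2) q.1) (s ×ˢ univ) := by
  refine ((hF.continuousOn_fderiv_of_isOpen (hs.prod isOpen_univ) le_rfl).clm_apply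
    (continuousOn_const (c := ((1 : ℝ), (0 : X))))).congr fun q hq => ?_
  exact (hasDerivAt_slice_of_contDiffOn hs hF hq.1 q.2).deriv

lemma continuous_deriv_slice_of_contDiffOn (hs : IsOpen s)
    (hF : ContDiffOn ℝ 1 (uncurry F) (s ×ˢ univ)) {t : ℝ} (ht : t ∈ s) :
    Continuous fun x => deriv (fun τ => F τ x) t :=
  continuousOn_univ.1 ((continuousOn_deriv_slice_of_contDiffOn hs hF).comp
    (f := fun x => (t, x)) (by fun_prop) fun _ hx => ⟨ht, hx⟩)

variable [MeasurableSpace X] [OpensMeasurableSpace X] {μ : Measure X} [IsFiniteMeasureOnCompacts μ]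

lemma hasDerivAt_integral_of_contDiffOn (hs : IsOpen s)
    (hF : ContDiffOn ℝ 1 (uncurry F) (s ×ˢ univ)) {t : ℝ} (ht : t ∈ s) {k : Set X}
    (hk : IsCompact k) (hsupp : ∀ᶠ τ in 𝓝 t, ∀ x ∉ k, F τ x = 0) :
    HasDerivAt (fun τ => ∫ x, F τ x ∂μ) (∫ x, deriv (fun τ => F τ x) t ∂μ) t := by
  have hsupp' : ∀ᶠ τ in 𝓝 t, ∀ x ∉ k, deriv (fun τ => F τ x) τ = 0 :=
    hsupp.eventually_nhds.mono fun _ => deriv_slice_eq_zero_of_eventually_eq_zero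
  obtain ⟨ε, hε, hball⟩ := Metric.nhds_basis_closedBall.eventually_iff.1
    ((hs.eventually_mem ht).and (hsupp.and hsupp'))
  have hint : ∀ τ ∈ Metric.closedBall t ε, Integrable (F τ) μ := fun τ hτ =>
    (continuousOn_univ.1 (hF.continuousOn.comp (f := fun x => (τ, x)) (by fun_prop)
      fun _ hx => ⟨(hball hτ).1, hx⟩)).integrable_of_hasCompactSupport (.intro hk (hball hτ).2.1)
  have hF' := continuousOn_deriv_slice_of_contDiffOn hs hF
  obtain ⟨B, hB⟩ := ((isCompact_closedBall t ε).prod hk).exists_bound_of_continuousOn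
    (hF'.mono (prod_mono (fun τ hτ => (hball hτ).1) (subset_univ _)))
  refine (hasDerivAt_integral_of_dominated_loc_of_deriv_le
    (F' := fun τ x => deriv (fun τ => F τ x) τ) (bound := k.indicator fun _ => B)
    (Metric.closedBall_mem_nhds t hε) ?_ (hint t (Metric.mem_closedBall_self hε.le)) ?_
    (ae_of_all μ fun x τ hτ => ?_) ?_ (ae_of_all μ fun x τ hτ => ?_)).2
  · filter_upwards [Metric.closedBall_mem_nhds t hε] with τ hτ
    exact (hint τ hτ).aestronglyMeasurable
  · exact ((continuous_deriv_slice_of_contDiffOn hs hF ht).integrable_of_hasCompactSupport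
      (.intro hk hsupp'.self_of_nhds)).aestronglyMeasurable
  · by_cases hx : x ∈ k
    · simpa [hx] using hB (τ, x) ⟨hτ, hx⟩
    · simp [hx, (hball hτ).2.2 x hx]
  · exact (integrable_indicator_iff hk.measurableSet).2 (integrableOn_const hk.measure_lt_top.ne)
  · exact (hasDerivAt_slice_of_contDiffOn hs hF (hball hτ).1 x).differentiableAt.hasDerivAt

end Leibniz

/-! ### The driven Korteweg–de Vries equation -/

/-- A classical solution `v` of the Korteweg–de Vries equation `∂ₜv + ∂ₓ³v + v ∂ₓv = γ ∂ₓn` driven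
by a non-negative density `n`, with `‖v(t)‖_{L²}` and `‖n(t)‖_{L¹}` bounded uniformly in time. In
the Schrödinger–Korteweg–de Vries system the density is `n = |u|²`. -/
structure IsDrivenKdVSolution (γ : ℝ) (n v : ℝ → ℝ → ℝ) : Prop where
  contDiff : ContDiff ℝ 3 (uncurry v)
  contDiff_density : ∀ t, ContDiff ℝ 1 (n t)
  density_nonneg : ∀ t x, 0 ≤ n t x
  equation : ∀ t x, deriv (fun τ => v τ x) t + iteratedDeriv 3 (v t) x + v t x * deriv (v t) x
    = γ * deriv (n t) x
  integrable_sq : ∀ t, Integrable fun x => v t x ^ 2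
  integrable_density : ∀ t, Integrable (n t)
  bounded : ∃ C, ∀ t, (∫ x, v t x ^ 2) + ∫ x, n t x ≤ C

/-- The nonlinear part `v²/2 - γ n` of the flux in the conservation law
`∂ₜv + ∂ₓ(∂ₓ²v + v²/2 - γ n) = 0`. For `γ < 0` it controls `v² + n`. -/
noncomputable def kdvFlux (γ : ℝ) (n v : ℝ → ℝ → ℝ) (t x : ℝ) : ℝ :=
  v t x ^ 2 / 2 - γ * n t x

namespace IsDrivenKdVSolution

variable {γ : ℝ} {n v : ℝ → ℝ → ℝ}

lemma contDiff_slice (h : IsDrivenKdVSolution γ n v) (t : ℝ) : ContDiff ℝ 3 (v t) :=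
  h.contDiff.comp (contDiff_prodMk_right t)

lemma contDiff_flux (h : IsDrivenKdVSolution γ n v) (t : ℝ) : ContDiff ℝ 1 (kdvFlux γ n v t) :=
  ((((h.contDiff_slice t).of_le (by norm_num)).pow 2).div_const 2).sub
    (contDiff_const.mul (h.contDiff_density t))

lemma memLp_two (h : IsDrivenKdVSolution γ n v) (t : ℝ) : MemLp (v t) 2 :=
  (memLp_two_iff_integrable_sq (h.contDiff_slice t).continuous.aestronglyMeasurable).2
    (h.integrable_sq t)

lemma integrable_flux (h : IsDrivenKdVSolution γ n v) (t : ℝ) : Integrable (kdvFlux γ n v t) :=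
  ((h.integrable_sq t).div_const 2).sub ((h.integrable_density t).const_mul γ)

lemma deriv_time_eq (h : IsDrivenKdVSolution γ n v) (t x : ℝ) :
    deriv (fun τ => v τ x) t = -iteratedDeriv 3 (v t) x - iteratedDeriv 1 (kdvFlux γ n v t) x := by
  have hv : DifferentiableAt ℝ (v t) x := (h.contDiff_slice t).differentiable (by norm_num) x
  have hn : DifferentiableAt ℝ (n t) x := (h.contDiff_density t).differentiable one_ne_zero x
  have hflux : deriv (kdvFlux γ n v t) x = v t x * deriv (v t) x - γ * deriv (n t) x := by
    refine (((hv.hasDerivAt.pow 2).div_const 2).sub (hn.hasDerivAt.const_mul γ)).deriv.trans ?_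
    ring
  rw [iteratedDeriv_one, hflux]
  linarith [h.equation t x]

lemma integral_deriv_time_mul (h : IsDrivenKdVSolution γ n v) {w : ℝ → ℝ} (hw : ContDiff ℝ 3 w)
    (hsupp : HasCompactSupport w) (t : ℝ) :
    ∫ x, deriv (fun τ => v τ x) t * w x
      = (∫ x, v t x * iteratedDeriv 3 w x) + ∫ x, kdvFlux γ n v t x * deriv w x := by
  have hv := h.contDiff_slice t
  have hf := h.contDiff_flux t
  have hdisp := integral_iteratedDeriv_mul_of_hasCompactSupport (k := 3) hv hw hsupp
  have hflux := integral_iteratedDeriv_mul_of_hasCompactSupport (k := 1) hf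
    (hw.of_le (by norm_num)) hsupp
  have hdispI : Integrable fun x => -(iteratedDeriv 3 (v t) x * w x) :=
    ((hv.continuous_iteratedDeriv' 3).mul hw.continuous).integrable_of_hasCompactSupport
      hsupp.mul_left |>.neg
  have hfluxI : Integrable fun x => iteratedDeriv 1 (kdvFlux γ n v t) x * w x :=
    ((hf.continuous_iteratedDeriv' 1).mul hw.continuous).integrable_of_hasCompactSupport
      hsupp.mul_left
  simp only [h.deriv_time_eq, sub_mul, neg_mul]
  rw [integral_sub hdispI hfluxI, integral_neg, hdisp, hflux]
  simp only [iteratedDeriv_one]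
  ring

lemma hasDerivAt_integral_mul (h : IsDrivenKdVSolution γ n v) {W : ℝ → ℝ → ℝ} {s : Set ℝ}
    (hs : IsOpen s) (hW : ContDiffOn ℝ 1 (uncurry W) (s ×ˢ univ)) {t : ℝ} (ht : t ∈ s)
    (hWt : ContDiff ℝ 3 (W t)) {k : Set ℝ} (hk : IsCompact k)
    (hsupp : ∀ᶠ τ in 𝓝 t, ∀ x ∉ k, W τ x = 0) :
    HasDerivAt (fun τ => ∫ x, v τ x * W τ x)
      ((∫ x, v t x * (deriv (fun τ => W τ x) t + iteratedDeriv 3 (W t) x))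
        + ∫ x, kdvFlux γ n v t x * deriv (W t) x) t := by
  have hv : ContDiffOn ℝ 1 (uncurry v) (s ×ˢ univ) := (h.contDiff.of_le (by norm_num)).contDiffOn
  have hWsupp : HasCompactSupport (W t) := .intro hk hsupp.self_of_nhds
  have hWsupp3 : HasCompactSupport (iteratedDeriv 3 (W t)) := by
    simpa only [iteratedDeriv_succ, iteratedDeriv_zero] using hWsupp.deriv.deriv.deriv
  have hWtsupp : HasCompactSupport fun x => deriv (fun τ => W τ x) t :=
    .intro hk (deriv_slice_eq_zero_of_eventually_eq_zero hsupp)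
  have hvc := (h.contDiff_slice t).continuous
  have hvWt : Integrable fun x => v t x * deriv (fun τ => W τ x) t :=
    (hvc.mul (continuous_deriv_slice_of_contDiffOn hs hW ht)).integrable_of_hasCompactSupport
      hWtsupp.mul_left
  have hvtW : Integrable fun x => deriv (fun τ => v τ x) t * W t x :=
    ((continuous_deriv_slice_of_contDiffOn hs hv ht).mul
      hWt.continuous).integrable_of_hasCompactSupport hWsupp.mul_left
  have hvW3 : Integrable fun x => v t x * iteratedDeriv 3 (W t) x :=
    (hvc.mul (hWt.continuous_iteratedDeriv' 3)).integrable_of_hasCompactSupport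
      hWsupp3.mul_left
  convert! hasDerivAt_integral_of_contDiffOn (μ := volume) (F := fun τ x => v τ x * W τ x) hs
    (hv.mul hW) ht hk (hsupp.mono fun τ hτ x hx => by rw [hτ x hx, mul_zero]) using 1
  have hprod : ∀ x, deriv (fun τ => v τ x * W τ x) t
      = deriv (fun τ => v τ x) t * W t x + v t x * deriv (fun τ => W τ x) t := fun x =>
    deriv_fun_mul (hasDerivAt_slice_of_contDiffOn hs hv ht x).differentiableAt
      (hasDerivAt_slice_of_contDiffOn hs hW ht x).differentiableAt
  simp only [hprod, mul_add]
  rw [integral_add hvWt hvW3, integral_add hvtW hvWt, h.integral_deriv_time_mul hWt hWsupp]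
  ring

end IsDrivenKdVSolution

/-! ### Two-scale virial weights -/

lemma contDiff_integral_right {E : Type*} [NormedAddCommGroup E] [NormedSpace ℝ E]
    [CompleteSpace E] {f : ℝ → E} {k : ℕ} (hf : ContDiff ℝ k f) (a : ℝ) :
    ContDiff ℝ (k + 1) fun u => ∫ y in a..u, f y := by
  have hderiv : ∀ u, HasDerivAt (fun u => ∫ y in a..u, f y) (f u) u := fun u =>
    (hf.continuous.integral_hasStrictDerivAt a u).hasDerivAt
  refine contDiff_succ_iff_deriv.2 ⟨fun u => (hderiv u).differentiableAt, by simp, ?_⟩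
  rwa [funext fun u => (hderiv u).deriv]

/-- The position of `x` relative to the moving centre `ξ t`, in units of the length `t ^ r`. -/
noncomputable def rescaled (ξ : ℝ → ℝ) (r t x : ℝ) : ℝ :=
  (x - ξ t) * t ^ (-r)

section Rescaled

variable {ξ : ℝ → ℝ} {r t x : ℝ}

lemma abs_rescaled (ht : 0 < t) : |rescaled ξ r t x| = |x - ξ t| / t ^ r := by
  rw [rescaled, abs_mul, Real.rpow_neg ht.le, abs_inv, abs_of_pos (Real.rpow_pos_of_pos ht r),
    div_eq_mul_inv]

lemma mem_closedBall_iff_abs_rescaled_le (ht : 0 < t) {L : ℝ} :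
    x ∈ Metric.closedBall (ξ t) (L * t ^ r) ↔ |rescaled ξ r t x| ≤ L := by
  rw [abs_rescaled ht, div_le_iff₀ (Real.rpow_pos_of_pos ht r), Metric.mem_closedBall,
    Real.dist_eq]

lemma hasDerivAt_rescaled_time (ht : 0 < t) (hξ : DifferentiableAt ℝ ξ t) :
    HasDerivAt (fun τ => rescaled ξ r τ x)
      (-(deriv ξ t * t ^ (-r)) - r * t⁻¹ * rescaled ξ r t x) t := by
  convert! (hξ.hasDerivAt.const_sub x).mul
    (Real.hasDerivAt_rpow_const (p := -r) (.inl ht.ne')) using 1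
  rw [rescaled, Real.rpow_sub_one ht.ne']
  ring

lemma hasDerivAt_rescaled (x : ℝ) : HasDerivAt (rescaled ξ r t) (t ^ (-r)) x := by
  rw [← one_mul (t ^ (-r))]
  exact ((hasDerivAt_id x).sub_const (ξ t)).mul_const (t ^ (-r))

lemma contDiff_rescaled {k : WithTop ℕ∞} : ContDiff ℝ k (rescaled ξ r t) := by
  unfold rescaled
  fun_prop

lemma contDiffOn_rescaled (hξ : ContDiffOn ℝ 1 ξ (Ioi 0)) :
    ContDiffOn ℝ 1 (uncurry (rescaled ξ r)) (Ioi 0 ×ˢ univ) := by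
  refine (contDiffOn_snd.sub (hξ.comp contDiffOn_fst fun q hq => hq.1)).mul fun q hq => ?_
  exact ((Real.contDiffAt_rpow_const_of_ne (ne_of_gt hq.1)).comp q
    contDiffAt_fst).contDiffWithinAt

lemma iteratedDeriv_comp_rescaled {f : ℝ → ℝ} {k : ℕ} (hf : ContDiff ℝ k f) :
    iteratedDeriv k (fun x => f (rescaled ξ r t x)) x
      = (t ^ (-r)) ^ k * iteratedDeriv k f (rescaled ξ r t x) := by
  have hscale := iteratedDeriv_comp_const_mul hf (t ^ (-r))
  have hshift := iteratedDeriv_comp_sub_const k (fun y => f (t ^ (-r) * y)) (ξ t)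
  simp only [rescaled, mul_comm _ (t ^ (-r))]
  rw [hshift, hscale]

end Rescaled

/-- The potential at scale `r` of the profile `φ`: the primitive of `φ` evaluated at the rescaled
position. Its spatial derivative is a bump of width comparable to `t ^ r` around `ξ t`. -/
noncomputable def scalePotential (φ : ContDiffBump (0 : ℝ)) (ξ : ℝ → ℝ) (r t x : ℝ) : ℝ :=
  ∫ y in 0..rescaled ξ r t x, φ y

/-- The error `(∂ₜ + ∂ₓ³) P` made by the potential `P` at scale `r` in the Airy equation. -/
noncomputable def airyDefect (φ : ContDiffBump (0 : ℝ)) (ξ : ℝ → ℝ) (r t x : ℝ) : ℝ :=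
  deriv (fun τ => scalePotential φ ξ r τ x) t + iteratedDeriv 3 (scalePotential φ ξ r t) x

/-- The weight tested against the solution: the difference of the potentials at the scales `p` and
`q`. Both potentials have the same limits at `±∞`, so the difference has compact support. -/
noncomputable def virialWeight (φ : ContDiffBump (0 : ℝ)) (ξ : ℝ → ℝ) (p q t x : ℝ) : ℝ :=
  scalePotential φ ξ p t x - scalePotential φ ξ q t x

section Potential

variable {φ : ContDiffBump (0 : ℝ)} {ξ : ℝ → ℝ} {r t x : ℝ}

lemma hasDerivAt_primitive_bump (z : ℝ) :
    HasDerivAt (fun z => ∫ y in 0..z, φ y) (φ z) z :=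
  (φ.continuous.integral_hasStrictDerivAt 0 z).hasDerivAt

lemma contDiff_primitive_bump (k : ℕ) : ContDiff ℝ k fun z => ∫ y in 0..z, φ y :=
  (contDiff_integral_right φ.contDiff 0).of_le (by exact_mod_cast k.le_succ)

lemma contDiff_scalePotential (k : ℕ) : ContDiff ℝ k (scalePotential φ ξ r t) :=
  (contDiff_primitive_bump k).comp contDiff_rescaled

lemma contDiffOn_scalePotential (hξ : ContDiffOn ℝ 1 ξ (Ioi 0)) :
    ContDiffOn ℝ 1 (uncurry (scalePotential φ ξ r)) (Ioi 0 ×ˢ univ) :=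
  (contDiff_primitive_bump 1).comp_contDiffOn (contDiffOn_rescaled hξ)

lemma hasDerivAt_scalePotential (x : ℝ) :
    HasDerivAt (scalePotential φ ξ r t) (φ (rescaled ξ r t x) * t ^ (-r)) x :=
  (hasDerivAt_primitive_bump _).comp x (hasDerivAt_rescaled x)

lemma airyDefect_eq (ht : 0 < t) (hξ : DifferentiableAt ℝ ξ t) :
    airyDefect φ ξ r t x
      = φ (rescaled ξ r t x) * (-(deriv ξ t * t ^ (-r)) - r * t⁻¹ * rescaled ξ r t x)
        + (t ^ (-r)) ^ 3 * iteratedDeriv 2 φ (rescaled ξ r t x) := by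
  have htime : HasDerivAt (fun τ => scalePotential φ ξ r τ x) _ t :=
    (hasDerivAt_primitive_bump _).comp t (hasDerivAt_rescaled_time ht hξ)
  have hprim : deriv (fun z => ∫ y in 0..z, φ y) = φ :=
    funext fun z => (hasDerivAt_primitive_bump z).deriv
  have hspace := iteratedDeriv_comp_rescaled (ξ := ξ) (r := r) (t := t) (x := x)
    (contDiff_primitive_bump (φ := φ) 3)
  rw [iteratedDeriv_succ' (f := fun z => ∫ y in 0..z, φ y), hprim] at hspace
  rw [airyDefect, htime.deriv]
  exact congrArg _ hspace

lemma airyDefect_eqOn_zero (ht : 0 < t) (hξ : DifferentiableAt ℝ ξ t) :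
    EqOn (airyDefect φ ξ r t) 0 (Metric.closedBall (ξ t) (φ.rOut * t ^ r))ᶜ := by
  intro x hx
  have hz : rescaled ξ r t x ∉ tsupport φ := by
    rw [φ.tsupport_eq, mem_closedBall_zero_iff, Real.norm_eq_abs]
    exact fun h => hx ((mem_closedBall_iff_abs_rescaled_le ht).2 h)
  have hφ'' : iteratedDeriv 2 φ (rescaled ξ r t x) = 0 := by
    rw [iteratedDeriv_eq_iteratedFDeriv,
      notMem_support.1 fun h => hz (support_iteratedFDeriv_subset 2 h)]
    rfl
  rw [airyDefect_eq ht hξ, image_eq_zero_of_notMem_tsupport hz, hφ'']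
  simp

lemma exists_abs_airyDefect_le (φ : ContDiffBump (0 : ℝ)) (r : ℝ) :
    ∃ M, ∀ (ξ : ℝ → ℝ) (t x : ℝ), 0 < t → DifferentiableAt ℝ ξ t →
      |airyDefect φ ξ r t x| ≤ |deriv ξ t| * t ^ (-r) + M * (t⁻¹ + t ^ (-3 * r)) := by
  have hcont'' : Continuous (iteratedDeriv 2 φ) := φ.contDiff.continuous_iteratedDeriv' 2
  have hsupp'' : HasCompactSupport (iteratedDeriv 2 φ) := by
    simpa only [iteratedDeriv_succ, iteratedDeriv_zero] using φ.hasCompactSupport.deriv.deriv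
  obtain ⟨M₁, hM₁⟩ := (φ.continuous.mul continuous_id).bounded_above_of_compact_support
    φ.hasCompactSupport.mul_right
  obtain ⟨M₂, hM₂⟩ := hcont''.bounded_above_of_compact_support hsupp''
  refine ⟨max (|r| * M₁) M₂, fun ξ t x ht hξ => ?_⟩
  have hcube : (t ^ (-r)) ^ 3 = t ^ (-3 * r) := by
    rw [← Real.rpow_mul_natCast ht.le]
    ring_nf
  rw [airyDefect_eq ht hξ, hcube]
  set z := rescaled ξ r t x
  have hdrift : |φ z * (deriv ξ t * t ^ (-r))| ≤ |deriv ξ t| * t ^ (-r) := by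
    rw [abs_mul, abs_mul, abs_of_nonneg φ.nonneg, abs_of_pos (Real.rpow_pos_of_pos ht _)]
    exact mul_le_of_le_one_left (by positivity) φ.le_one
  have hscale : |r * t⁻¹ * (φ z * z)| ≤ max (|r| * M₁) M₂ * t⁻¹ := by
    rw [abs_mul, abs_mul, abs_of_pos (inv_pos.2 ht), mul_right_comm]
    gcongr
    exact (mul_le_mul_of_nonneg_left (hM₁ z) (abs_nonneg r)).trans (le_max_left ..)
  have hdisp : |t ^ (-3 * r) * iteratedDeriv 2 φ z| ≤ max (|r| * M₁) M₂ * t ^ (-3 * r) := by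
    rw [abs_mul, abs_of_pos (Real.rpow_pos_of_pos ht _), mul_comm]
    gcongr
    exact (hM₂ z).trans (le_max_right ..)
  calc |φ z * (-(deriv ξ t * t ^ (-r)) - r * t⁻¹ * z) + t ^ (-3 * r) * iteratedDeriv 2 φ z|
      = |-(φ z * (deriv ξ t * t ^ (-r))) - r * t⁻¹ * (φ z * z)
          + t ^ (-3 * r) * iteratedDeriv 2 φ z| := by
        congr 1
        ring
    _ ≤ |φ z * (deriv ξ t * t ^ (-r))| + |r * t⁻¹ * (φ z * z)|
          + |t ^ (-3 * r) * iteratedDeriv 2 φ z| := by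
        refine (abs_add_le _ _).trans (add_le_add_left ((abs_sub _ _).trans ?_) _)
        rw [abs_neg]
    _ ≤ |deriv ξ t| * t ^ (-r) + max (|r| * M₁) M₂ * (t⁻¹ + t ^ (-3 * r)) := by
        linarith

end Potential

section Weight

variable {φ : ContDiffBump (0 : ℝ)} {ξ : ℝ → ℝ} {p q t x : ℝ}

lemma contDiff_virialWeight (k : ℕ) : ContDiff ℝ k (virialWeight φ ξ p q t) :=
  (contDiff_scalePotential k).sub (contDiff_scalePotential k)

lemma contDiffOn_virialWeight (hξ : ContDiffOn ℝ 1 ξ (Ioi 0)) :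
    ContDiffOn ℝ 1 (uncurry (virialWeight φ ξ p q)) (Ioi 0 ×ˢ univ) :=
  (contDiffOn_scalePotential hξ).sub (contDiffOn_scalePotential hξ)

lemma deriv_virialWeight (x : ℝ) :
    deriv (virialWeight φ ξ p q t) x
      = φ (rescaled ξ p t x) * t ^ (-p) - φ (rescaled ξ q t x) * t ^ (-q) :=
  ((hasDerivAt_scalePotential x).sub (hasDerivAt_scalePotential x)).deriv

lemma deriv_time_add_iteratedDeriv_virialWeight (hξ : ContDiffOn ℝ 1 ξ (Ioi 0)) (ht : 0 < t) :
    deriv (fun τ => virialWeight φ ξ p q τ x) t + iteratedDeriv 3 (virialWeight φ ξ p q t) x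
      = airyDefect φ ξ p t x - airyDefect φ ξ q t x := by
  have htime : ∀ r, DifferentiableAt ℝ (fun τ => scalePotential φ ξ r τ x) t := fun r =>
    (hasDerivAt_slice_of_contDiffOn isOpen_Ioi (contDiffOn_scalePotential hξ) ht
      x).differentiableAt
  have hspace : ∀ r, ContDiffAt ℝ 3 (scalePotential φ ξ r t) x := fun r =>
    (contDiff_scalePotential 3).contDiffAt
  rw [airyDefect, airyDefect, add_sub_add_comm]
  exact congrArg₂ (· + ·) (deriv_fun_sub (htime p) (htime q))
    (iteratedDeriv_fun_sub (hspace p) (hspace q))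

lemma virialWeight_eq_integral :
    virialWeight φ ξ p q t x = ∫ y in rescaled ξ q t x..rescaled ξ p t x, φ y :=
  intervalIntegral.integral_interval_sub_left (φ.continuous.intervalIntegrable ..)
    (φ.continuous.intervalIntegrable ..)

lemma abs_virialWeight_le (φ : ContDiffBump (0 : ℝ)) (ξ : ℝ → ℝ) (p q t x : ℝ) :
    |virialWeight φ ξ p q t x| ≤ ∫ y, φ y := by
  rw [virialWeight_eq_integral, ← Real.norm_eq_abs]
  refine intervalIntegral.norm_integral_le_integral_norm_uIoc.trans ?_
  simp only [Real.norm_of_nonneg φ.nonneg]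
  exact setIntegral_le_integral φ.integrable (ae_of_all _ fun _ => φ.nonneg)

lemma virialWeight_eq_zero (ht : 0 < t)
    (hx : φ.rOut * max (t ^ p) (t ^ q) < |x - ξ t|) : virialWeight φ ξ p q t x = 0 := by
  have hfar : ∀ r : ℝ, t ^ r ≤ max (t ^ p) (t ^ q) → φ.rOut < |x - ξ t| * t ^ (-r) := fun r hr => by
    rw [Real.rpow_neg ht.le, ← div_eq_mul_inv, lt_div_iff₀ (Real.rpow_pos_of_pos ht r)]
    exact (mul_le_mul_of_nonneg_left hr φ.rOut_pos.le).trans_lt hx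
  have hp := hfar p (le_max_left ..)
  have hq := hfar q (le_max_right ..)
  rw [virialWeight_eq_integral]
  refine (intervalIntegral.integral_congr fun y hy => φ.zero_of_le_dist ?_).trans
    intervalIntegral.integral_zero
  rw [Real.dist_eq, sub_zero]
  rw [mem_uIcc, rescaled, rescaled] at hy
  rcases abs_cases (x - ξ t) with ⟨h, -⟩ | ⟨h, -⟩ <;> rw [h] at hp hq
  · refine le_trans ?_ (le_abs_self y)
    rcases hy with hy | hy <;> linarith [hy.1]
  · refine le_trans ?_ (neg_le_abs y)
    rcases hy with hy | hy <;> linarith [hy.2]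

lemma virialWeight_eqOn_zero (ht : 1 ≤ t) (hpq : p ≤ q) :
    EqOn (virialWeight φ ξ p q t) 0 (Metric.closedBall (ξ t) (φ.rOut * t ^ q))ᶜ := by
  intro x hx
  refine virialWeight_eq_zero (one_pos.trans_le ht) ?_
  rw [max_eq_right (Real.rpow_le_rpow_of_exponent_le ht hpq)]
  rwa [mem_compl_iff, Metric.mem_closedBall, Real.dist_eq, not_le] at hx

lemma exists_isCompact_virialWeight_eq_zero (hξ : ContinuousAt ξ t) (ht : 0 < t) :
    ∃ k, IsCompact k ∧ ∀ᶠ τ in 𝓝 t, ∀ x ∉ k, virialWeight φ ξ p q τ x = 0 := by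
  set R : ℝ → ℝ := fun τ => |ξ τ| + φ.rOut * max (τ ^ p) (τ ^ q)
  have hpow : ∀ r : ℝ, ContinuousAt (fun τ : ℝ => τ ^ r) t := fun r =>
    Real.continuousAt_rpow_const t r (.inl ht.ne')
  have hRc : ContinuousAt R t := hξ.abs.add (continuousAt_const.mul ((hpow p).max (hpow q)))
  refine ⟨Metric.closedBall 0 (R t + 1), isCompact_closedBall _ _, ?_⟩
  filter_upwards [hRc.eventually_le_const (lt_add_one _), lt_mem_nhds ht] with τ hτ hτ0 x hx
  refine virialWeight_eq_zero hτ0 ?_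
  rw [mem_closedBall_zero_iff, Real.norm_eq_abs, not_le] at hx
  linarith [abs_sub_abs_le_abs_sub x (ξ τ)]

end Weight

/-! ### Growth of the virial -/

namespace IsDrivenKdVSolution

variable {γ : ℝ} {n v : ℝ → ℝ → ℝ} {φ : ContDiffBump (0 : ℝ)} {ξ : ℝ → ℝ} {p q r : ℝ}

lemma isBigO_integral_mul (h : IsDrivenKdVSolution γ n v) {g : ℝ → ℝ → ℝ} {b : ℝ → ℝ} {L : ℝ}
    (hL : 0 ≤ L) (hg : ∀ᶠ t in atTop, ∀ x, |g t x| ≤ b t)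
    (hsupp : ∀ᶠ t in atTop, EqOn (g t) 0 (Metric.closedBall (ξ t) (L * t ^ r))ᶜ) :
    (fun t => ∫ x, v t x * g t x) =O[atTop] fun t => b t * t ^ (r / 2) := by
  obtain ⟨C, hC⟩ := h.bounded
  refine .of_bound (√(2 * L) * √C) ?_
  filter_upwards [hg, hsupp, eventually_gt_atTop 0] with t hgt hst ht
  have hmass : ∫ x, v t x ^ 2 ≤ C :=
    (le_add_of_nonneg_right (integral_nonneg (h.density_nonneg t))).trans (hC t)
  have hwidth : √(volume.real (Metric.closedBall (ξ t) (L * t ^ r))) = √(2 * L) * t ^ (r / 2) := by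
    rw [Real.volume_real_closedBall (by positivity), ← mul_assoc, Real.sqrt_mul (by positivity),
      Real.sqrt_eq_rpow (t ^ r), ← Real.rpow_mul ht.le, div_eq_mul_one_div r 2]
  have hb : 0 ≤ b t := (abs_nonneg _).trans (hgt 0)
  have hbound := abs_integral_mul_le_of_eqOn_zero (h.memLp_two t)
    measurableSet_closedBall measure_closedBall_lt_top.ne hgt hst
  rw [hwidth] at hbound
  calc ‖∫ x, v t x * g t x‖ ≤ b t * (√(2 * L) * t ^ (r / 2)) * √(∫ x, v t x ^ 2) := hbound
    _ ≤ b t * (√(2 * L) * t ^ (r / 2)) * √C := by gcongr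
    _ = √(2 * L) * √C * ‖b t * t ^ (r / 2)‖ := by
      rw [Real.norm_of_nonneg (by positivity)]
      ring

lemma isLittleO_integral_mul_virialWeight (h : IsDrivenKdVSolution γ n v) (hpq : p ≤ q)
    (hq : q < 2 - 2 * p) :
    (fun t => ∫ x, v t x * virialWeight φ ξ p q t x) =o[atTop] fun t => t ^ (1 - p) := by
  have hO := h.isBigO_integral_mul φ.rOut_pos.le
    (.of_forall fun t x => abs_virialWeight_le φ ξ p q t x)
    ((eventually_ge_atTop 1).mono fun t ht => virialWeight_eqOn_zero ht hpq)
  refine hO.trans_isLittleO ((isLittleO_rpow_rpow_atTop ?_).const_mul_left _)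
  linarith

lemma isLittleO_integral_mul_airyDefect (h : IsDrivenKdVSolution γ n v)
    (hξ : ∀ t > 0, DifferentiableAt ℝ ξ t)
    (hξ' : deriv ξ =o[atTop] fun t => t ^ (-(p / 2))) (hp : 0 < p) (hpr : p ≤ r)
    (hr : r < 2 - 2 * p) :
    (fun t => ∫ x, v t x * airyDefect φ ξ r t x) =o[atTop] fun t => t ^ (-p) := by
  obtain ⟨M, hM⟩ := exists_abs_airyDefect_le φ r
  have hO := h.isBigO_integral_mul φ.rOut_pos.le
    ((eventually_gt_atTop 0).mono fun t ht x => hM ξ t x ht (hξ t ht))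
    ((eventually_gt_atTop 0).mono fun t ht => airyDefect_eqOn_zero ht (hξ t ht))
  refine hO.trans_isLittleO ?_
  have hdrift : (fun t => |deriv ξ t| * t ^ (-(r / 2))) =o[atTop] fun t => t ^ (-p) := by
    refine (hξ'.abs_left.mul_isBigO (isBigO_refl (fun t : ℝ => t ^ (-(r / 2))) _)).trans_isBigO ?_
    refine .of_bound 1 ?_
    filter_upwards [eventually_ge_atTop 1] with t ht
    have ht0 : 0 < t := by linarith
    rw [one_mul, ← Real.rpow_add ht0, Real.norm_of_nonneg (by positivity),
      Real.norm_of_nonneg (by positivity)]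
    exact Real.rpow_le_rpow_of_exponent_le ht (by linarith)
  have hscale : (fun t : ℝ => t ^ (r / 2 - 1)) =o[atTop] fun t => t ^ (-p) :=
    isLittleO_rpow_rpow_atTop (by linarith)
  have hdisp : (fun t : ℝ => t ^ (-5 * r / 2)) =o[atTop] fun t => t ^ (-p) :=
    isLittleO_rpow_rpow_atTop (by linarith)
  refine (hdrift.add ((hscale.add hdisp).const_mul_left M)).congr' ?_ .rfl
  filter_upwards [eventually_gt_atTop 0] with t ht
  have h₁ : t ^ (-r) * t ^ (r / 2) = t ^ (-(r / 2)) := by rw [← Real.rpow_add ht]; ring_nf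
  have h₂ : t⁻¹ * t ^ (r / 2) = t ^ (r / 2 - 1) := by rw [Real.rpow_sub_one ht.ne']; ring
  have h₃ : t ^ (-3 * r) * t ^ (r / 2) = t ^ (-5 * r / 2) := by
    rw [← Real.rpow_add ht]; ring_nf
  rw [← h₁, ← h₂, ← h₃]
  ring

lemma mul_density_le_flux (h : IsDrivenKdVSolution γ n v) (t x : ℝ) :
    min (1 / 2) (-γ) * (v t x ^ 2 + n t x) ≤ kdvFlux γ n v t x := by
  have hv := mul_le_mul_of_nonneg_right (min_le_left (1 / 2) (-γ)) (sq_nonneg (v t x))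
  have hn := mul_le_mul_of_nonneg_right (min_le_right (1 / 2) (-γ)) (h.density_nonneg t x)
  rw [kdvFlux]
  linarith

lemma flux_nonneg (h : IsDrivenKdVSolution γ n v) (hγ : γ ≤ 0) (t x : ℝ) :
    0 ≤ kdvFlux γ n v t x :=
  add_nonneg (by positivity) (neg_nonneg.2 (mul_nonpos_of_nonpos_of_nonneg hγ
    (h.density_nonneg t x)))

lemma exists_integral_flux_le (h : IsDrivenKdVSolution γ n v) (hγ : γ ≤ 0) :
    ∃ C, ∀ t, ∫ x, kdvFlux γ n v t x ≤ C := by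
  obtain ⟨C, hC⟩ := h.bounded
  refine ⟨(1 / 2 - γ) * C, fun t => ?_⟩
  have hv : 0 ≤ ∫ x, v t x ^ 2 := integral_nonneg fun x => sq_nonneg (v t x)
  have hn : 0 ≤ ∫ x, n t x := integral_nonneg (h.density_nonneg t)
  simp only [kdvFlux]
  rw [integral_sub ((h.integrable_sq t).div_const 2) ((h.integrable_density t).const_mul γ),
    integral_div, integral_const_mul]
  nlinarith [hC t]

lemma integrable_flux_mul_bump (h : IsDrivenKdVSolution γ n v) (r t : ℝ) :
    Integrable fun x => kdvFlux γ n v t x * φ (rescaled ξ r t x) := by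
  have hbump : Continuous fun x => φ (rescaled ξ r t x) :=
    φ.continuous.comp (contDiff_rescaled (k := 0)).continuous
  refine (h.integrable_flux t).mul_bdd hbump.aestronglyMeasurable (ae_of_all _ fun x => ?_) (c := 1)
  rw [Real.norm_of_nonneg φ.nonneg]
  exact φ.le_one

lemma mul_setIntegral_le_integral_flux_mul_bump (h : IsDrivenKdVSolution γ n v) (hγ : γ ≤ 0)
    {t : ℝ} (ht : 0 < t) :
    min (1 / 2) (-γ) * ∫ x in Metric.closedBall (ξ t) (φ.rIn * t ^ r), (v t x ^ 2 + n t x)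
      ≤ ∫ x, kdvFlux γ n v t x * φ (rescaled ξ r t x) := by
  rw [← integral_const_mul]
  calc ∫ x in Metric.closedBall (ξ t) (φ.rIn * t ^ r), min (1 / 2) (-γ) * (v t x ^ 2 + n t x)
      ≤ ∫ x in Metric.closedBall (ξ t) (φ.rIn * t ^ r),
          kdvFlux γ n v t x * φ (rescaled ξ r t x) := by
        refine setIntegral_mono_on ?_ (h.integrable_flux_mul_bump r t).integrableOn
          measurableSet_closedBall fun x hx => ?_
        · exact (((h.integrable_sq t).add (h.integrable_density t)).const_mul _).integrableOn
        · have hone : φ (rescaled ξ r t x) = 1 := φ.one_of_mem_closedBall <| by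
            rw [mem_closedBall_zero_iff]
            exact (mem_closedBall_iff_abs_rescaled_le ht).1 hx
          rw [hone, mul_one]
          exact h.mul_density_le_flux t x
    _ ≤ ∫ x, kdvFlux γ n v t x * φ (rescaled ξ r t x) :=
        setIntegral_le_integral (h.integrable_flux_mul_bump r t)
          (ae_of_all _ fun x => mul_nonneg (h.flux_nonneg hγ t x) φ.nonneg)

lemma exists_le_integral_flux_mul_deriv_virialWeight (h : IsDrivenKdVSolution γ n v) (hγ : γ ≤ 0)
    (φ : ContDiffBump (0 : ℝ)) (ξ : ℝ → ℝ) (p q : ℝ) :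
    ∃ C, ∀ t > 0,
      min (1 / 2) (-γ) * (∫ x in Metric.closedBall (ξ t) (φ.rIn * t ^ p), (v t x ^ 2 + n t x))
          * t ^ (-p) - C * t ^ (-q)
        ≤ ∫ x, kdvFlux γ n v t x * deriv (virialWeight φ ξ p q t) x := by
  obtain ⟨C, hC⟩ := h.exists_integral_flux_le hγ
  refine ⟨C, fun t ht => ?_⟩
  have houter : ∫ x, kdvFlux γ n v t x * φ (rescaled ξ q t x) ≤ C :=
    (integral_mono (h.integrable_flux_mul_bump q t) (h.integrable_flux t) fun x =>
      mul_le_of_le_one_right (h.flux_nonneg hγ t x) φ.le_one).trans (hC t)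
  have hinner := h.mul_setIntegral_le_integral_flux_mul_bump (φ := φ) (ξ := ξ) (r := p) hγ ht
  calc _ ≤ (∫ x, kdvFlux γ n v t x * φ (rescaled ξ p t x)) * t ^ (-p)
          - (∫ x, kdvFlux γ n v t x * φ (rescaled ξ q t x)) * t ^ (-q) := by gcongr
    _ = ∫ x, kdvFlux γ n v t x * deriv (virialWeight φ ξ p q t) x := by
      simp only [deriv_virialWeight, mul_sub, ← mul_assoc]
      rw [integral_sub ((h.integrable_flux_mul_bump p t).mul_const _)
        ((h.integrable_flux_mul_bump q t).mul_const _), integral_mul_const, integral_mul_const]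

lemma integrable_mul_airyDefect (h : IsDrivenKdVSolution γ n v) (hξ : ContDiffOn ℝ 1 ξ (Ioi 0))
    {t : ℝ} (ht : 0 < t) : Integrable fun x => v t x * airyDefect φ ξ r t x := by
  have hdiff : DifferentiableAt ℝ ξ t :=
    (hξ.contDiffAt (Ioi_mem_nhds ht)).differentiableAt one_ne_zero
  have hcont : Continuous (airyDefect φ ξ r t) :=
    (continuous_deriv_slice_of_contDiffOn isOpen_Ioi (contDiffOn_scalePotential hξ) ht).add
      ((contDiff_scalePotential 3).continuous_iteratedDeriv' 3)
  have hsupp : HasCompactSupport (airyDefect φ ξ r t) :=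
    .intro (isCompact_closedBall _ _) fun _ hx => airyDefect_eqOn_zero ht hdiff hx
  exact ((h.contDiff_slice t).continuous.mul hcont).integrable_of_hasCompactSupport hsupp.mul_left

lemma hasDerivAt_integral_mul_virialWeight (h : IsDrivenKdVSolution γ n v)
    (hξ : ContDiffOn ℝ 1 ξ (Ioi 0)) {t : ℝ} (ht : 0 < t) :
    HasDerivAt (fun τ => ∫ x, v τ x * virialWeight φ ξ p q τ x)
      ((∫ x, v t x * airyDefect φ ξ p t x) - (∫ x, v t x * airyDefect φ ξ q t x)
        + ∫ x, kdvFlux γ n v t x * deriv (virialWeight φ ξ p q t) x) t := by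
  obtain ⟨k, hk, hsupp⟩ := exists_isCompact_virialWeight_eq_zero (φ := φ) (p := p) (q := q)
    (hξ.continuousOn.continuousAt (Ioi_mem_nhds ht)) ht
  have hvirial := h.hasDerivAt_integral_mul isOpen_Ioi (contDiffOn_virialWeight hξ) ht
    (contDiff_virialWeight 3) hk hsupp
  simp only [deriv_time_add_iteratedDeriv_virialWeight hξ ht, mul_sub] at hvirial
  rwa [integral_sub (h.integrable_mul_airyDefect hξ ht) (h.integrable_mul_airyDefect hξ ht)]
    at hvirial

lemma eventually_le_deriv_integral_mul_virialWeight (h : IsDrivenKdVSolution γ n v) (hγ : γ < 0)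
    (hξ : ContDiffOn ℝ 1 ξ (Ioi 0)) (hξ' : deriv ξ =o[atTop] fun t => t ^ (-(p / 2)))
    (hp : 0 < p) (hpq : p < q) (hq : q < 2 - 2 * p) {δ : ℝ} (hδ : 0 < δ)
    (hmass : ∀ᶠ t in atTop,
      δ ≤ ∫ x in Metric.closedBall (ξ t) (φ.rIn * t ^ p), (v t x ^ 2 + n t x)) :
    ∀ᶠ t in atTop, min (1 / 2) (-γ) * δ / 2 * t ^ (-p)
      ≤ deriv (fun τ => ∫ x, v τ x * virialWeight φ ξ p q τ x) t := by
  have hκ : 0 < min (1 / 2) (-γ) := lt_min one_half_pos (neg_pos.2 hγ)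
  have hdiff : ∀ t > 0, DifferentiableAt ℝ ξ t := fun t ht =>
    (hξ.contDiffAt (Ioi_mem_nhds ht)).differentiableAt one_ne_zero
  obtain ⟨C, hC⟩ := h.exists_le_integral_flux_mul_deriv_virialWeight hγ.le φ ξ p q
  have herror : (fun t => (∫ x, v t x * airyDefect φ ξ p t x)
      - (∫ x, v t x * airyDefect φ ξ q t x) - C * t ^ (-q)) =o[atTop] fun t => t ^ (-p) :=
    ((h.isLittleO_integral_mul_airyDefect hdiff hξ' hp le_rfl (hpq.trans hq)).sub
      (h.isLittleO_integral_mul_airyDefect hdiff hξ' hp hpq.le hq)).sub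
      ((isLittleO_rpow_rpow_atTop (neg_lt_neg hpq)).const_mul_left C)
  filter_upwards [hmass, herror.bound (half_pos (mul_pos hκ hδ)), eventually_gt_atTop 0]
    with t hδt herr ht
  have hpow : 0 < t ^ (-p) := Real.rpow_pos_of_pos ht _
  rw [Real.norm_of_nonneg hpow.le] at herr
  have hmain : min (1 / 2) (-γ) * δ * t ^ (-p) - C * t ^ (-q)
      ≤ ∫ x, kdvFlux γ n v t x * deriv (virialWeight φ ξ p q t) x :=
    le_trans (by gcongr) (hC t ht)
  rw [(h.hasDerivAt_integral_mul_virialWeight hξ ht).deriv]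
  linarith [(abs_le.1 herr).1]

end IsDrivenKdVSolution

theorem skdv_L2_decay_noncentered_general {γ : ℝ} {n v : ℝ → ℝ → ℝ}
    (h : IsDrivenKdVSolution γ n v) (hγ : γ < 0) {ξ : ℝ → ℝ} {p K : ℝ}
    (hξ : ContDiffOn ℝ 1 ξ (Ioi 0)) (hξ' : deriv ξ =o[atTop] fun t => t ^ (-(p / 2)))
    (hp : 0 < p) (hp' : p < 2 / 3) (hK : 0 < K) :
    liminf (fun t => ∫ x in Metric.closedBall (ξ t) (K * t ^ p), (v t x ^ 2 + n t x)) atTop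
      = 0 := by
  refine liminf_eq_zero_of_frequently_lt (.of_forall fun t => integral_nonneg fun x =>
    add_nonneg (sq_nonneg _) (h.density_nonneg t x)) fun δ hδ => ?_
  by_contra hmass
  simp only [not_frequently, not_lt] at hmass
  let φ : ContDiffBump (0 : ℝ) := ⟨K, 2 * K, hK, by linarith⟩
  obtain ⟨q, hpq, hq⟩ : ∃ q, p < q ∧ q < 2 - 2 * p := exists_between (by linarith)
  refine not_isLittleO_of_rpow_le_deriv
    (half_pos (mul_pos (lt_min one_half_pos (neg_pos.2 hγ)) hδ)) (by linarith) ?_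
    (h.eventually_le_deriv_integral_mul_virialWeight (φ := φ) hγ hξ hξ' hp hpq hq hδ hmass)
    (h.isLittleO_integral_mul_virialWeight (φ := φ) (ξ := ξ) hpq.le hq)
  filter_upwards [eventually_gt_atTop 0] with t ht
  exact (h.hasDerivAt_integral_mul_virialWeight hξ ht).differentiableAt.hasDerivAt

lemma deriv_rpow_isLittleO_atTop {m b : ℝ} (hmb : m < 1 + b) :
    deriv (fun t : ℝ => t ^ m) =o[atTop] fun t => t ^ b := by
  rw [funext fun t : ℝ => Real.deriv_rpow_const t m]
  exact (isLittleO_rpow_rpow_atTop (sub_left_lt_of_lt_add hmb)).const_mul_left m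

lemma contDiffOn_rpow_Ioi (m : ℝ) : ContDiffOn ℝ 1 (fun t : ℝ => t ^ m) (Ioi 0) :=
  fun _ ht => (Real.contDiffAt_rpow_const_of_ne (ne_of_gt ht)).contDiffWithinAt

lemma IsSKdVSolution.isDrivenKdVSolution {α β γ : ℝ} {u : ℝ → ℝ → ℂ} {v : ℝ → ℝ → ℝ}
    (h : IsSKdVSolution α β γ u v) : IsDrivenKdVSolution γ (fun t x => ‖u t x‖ ^ 2) v := by
  obtain ⟨hu, hv, huS, hvS, -, hKdV, C, hC⟩ := h
  refine ⟨contDiff_infty.1 hv 3, fun t => ?_, fun t x => sq_nonneg _, hKdV, fun t => ?_,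
    fun t => ?_, C, fun t => ?_⟩
  · exact (contDiff_infty.1 (hu.comp (contDiff_prodMk_right t)) 1).norm_sq ℝ
  · obtain ⟨g, hg⟩ := hvS t
    simpa only [hg] using (g.memLp 2 volume).integrable_sq
  · obtain ⟨f, hf⟩ := huS t
    simpa only [hf] using (f.memLp 2 volume).norm.integrable_sq
  · have hux : 0 ≤ ∫ x, ‖deriv (u t) x‖ ^ 2 := integral_nonneg fun x => sq_nonneg _
    have hvx : 0 ≤ ∫ x, deriv (v t) x ^ 2 := integral_nonneg fun x => sq_nonneg _
    linarith [hC t]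

/-- Decay of the `L²` mass of `(u,v)` on the moving regions `|x - t^m| ≤ K t^{p₁}`,
    `0 < p₁ < 2/3`, `0 < m < 1 - p₁/2`, along a sequence of times. -/
theorem skdv_L2_decay_noncentered (α β γ : ℝ) (hα : α < 0) (hγ : γ < 0)
    (u : ℝ → ℝ → ℂ) (v : ℝ → ℝ → ℝ) (hsol : IsSKdVSolution α β γ u v)
    (p₁ m K : ℝ) (hp₁ : 0 < p₁) (hp₁' : p₁ < 2 / 3)
    (hm : 0 < m) (hm' : m < 1 - p₁ / 2) (hK : 0 < K) :
    liminf (fun t : ℝ =>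
        ∫ x in {x : ℝ | |x - t ^ m| ≤ K * t ^ p₁}, ((v t x) ^ 2 + ‖u t x‖ ^ 2)) atTop = 0 := by
  refine skdv_L2_decay_noncentered_general hsol.isDrivenKdVSolution hγ (contDiffOn_rpow_Ioi m)
    (deriv_rpow_isLittleO_atTop ?_) hp₁ hp₁' hK
  linarith
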